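/- There exists an RDGDD(3, 4, 42) of type 3^14, i.e., a group divisible design GDD(3, 4, 42) of type 3^14 whose derived design at every point is resolvable. -/

import Mathlib

open Finset

/-- A parallel class on point set `Y`: a collection of blocks that partitions `Y`. -/
def IsParallelClass (Y : Finset ℕ) (P : Finset (Finset ℕ)) : Prop :=
  (∀ b ∈ P, b ⊆ Y) ∧ ∀ y ∈ Y, ∃! b, b ∈ P ∧ y ∈ b

/-- A block collection `B` on point set `Y` is resolvable if it can be partitioned
into parallel classes of `Y`. -/
def Resolvable (Y : Finset ℕ) (B : Finset (Finset ℕ)) : Prop :=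
  ∃ (r : ℕ) (P : Fin r → Finset (Finset ℕ)),
    (∀ i, IsParallelClass Y (P i)) ∧ (∀ i, P i ⊆ B) ∧ ∀ b ∈ B, ∃! i, b ∈ P i

/-- The blocks of the derived design at a point `x`:
`{B \ {x} : x ∈ B, B ∈ B}`. -/
def derivedBlocks (B : Finset (Finset ℕ)) (x : ℕ) : Finset (Finset ℕ) :=
  (B.filter fun b => x ∈ b).image fun b => b.erase x

/-- A Steiner system S(t, k, v) on point set `X` with block collection `B`. -/
def IsSteiner (t k v : ℕ) (X : Finset ℕ) (B : Finset (Finset ℕ)) : Prop :=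
  X.card = v ∧ (∀ b ∈ B, b ⊆ X ∧ b.card = k) ∧
  ∀ T ⊆ X, T.card = t → ∃! b, b ∈ B ∧ T ⊆ b

/-- An RDS(t, k, v): a Steiner system S(t, k, v) whose derived design at every
point is resolvable. -/
def IsRDS (t k v : ℕ) (X : Finset ℕ) (B : Finset (Finset ℕ)) : Prop :=
  IsSteiner t k v X B ∧ ∀ x ∈ X, Resolvable (X.erase x) (derivedBlocks B x)

/-- Existence of an RDS(t, k, v). -/
def ExistsRDS (t k v : ℕ) : Prop := ∃ X B, IsRDS t k v X B

/-- Existence of an RDSQS(v), i.e. an RDS(3, 4, v). -/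
def ExistsRDSQS (v : ℕ) : Prop := ExistsRDS 3 4 v

/-- A Kirkman triple system KTS(v): a resolvable Steiner triple system. -/
def IsKTS (v : ℕ) (X : Finset ℕ) (B : Finset (Finset ℕ)) : Prop :=
  IsSteiner 2 3 v X B ∧ Resolvable X B

/-- Existence of a large set of Kirkman triple systems LKTS(v): a partition of
all 3-element subsets of a v-element set into v - 2 classes, each a KTS(v). -/
def ExistsLKTS (v : ℕ) : Prop :=
  ∃ (X : Finset ℕ) (C : Fin (v - 2) → Finset (Finset ℕ)),
    X.card = v ∧ (∀ i, IsKTS v X (C i)) ∧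
    (∀ T : Finset ℕ, (T ⊆ X ∧ T.card = 3) ↔ ∃ i, T ∈ C i) ∧
    ∀ (T : Finset ℕ) (i j : Fin (v - 2)), T ∈ C i → T ∈ C j → i = j

/-- A t-wise balanced design S(t, K, v) with block sizes from the set `K`. -/
def IsTBD (t : ℕ) (K : Set ℕ) (v : ℕ) (X : Finset ℕ) (B : Finset (Finset ℕ)) : Prop :=
  X.card = v ∧ (∀ b ∈ B, b ⊆ X ∧ b.card ∈ K) ∧
  ∀ T ⊆ X, T.card = t → ∃! b, b ∈ B ∧ T ⊆ b

/-- A group divisible design GDD(t, K, g*n) of type g^n: `Gs` is a partition of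
`X` into `n` groups of size `g`; blocks have sizes in `K`, meet every group in
at most one point, and every t-subset of `X` meeting every group in at most one
point lies in exactly one block. -/
def IsGDD (t : ℕ) (K : Set ℕ) (g n : ℕ) (X : Finset ℕ)
    (Gs Bs : Finset (Finset ℕ)) : Prop :=
  X.card = g * n ∧ Gs.card = n ∧
  (∀ G ∈ Gs, G ⊆ X ∧ G.card = g) ∧
  (∀ x ∈ X, ∃! G, G ∈ Gs ∧ x ∈ G) ∧
  (∀ b ∈ Bs, b ⊆ X ∧ b.card ∈ K) ∧
  (∀ b ∈ Bs, ∀ G ∈ Gs, (b ∩ G).card ≤ 1) ∧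
  ∀ T ⊆ X, T.card = t → (∀ G ∈ Gs, (T ∩ G).card ≤ 1) → ∃! b, b ∈ Bs ∧ T ⊆ b

/-- An RDGDD(t, K, g*n) of type g^n: a GDD whose derived design at every point
(on point set `X \ G`, where `G` is the group of the point) is resolvable. -/
def IsRDGDD (t : ℕ) (K : Set ℕ) (g n : ℕ) (X : Finset ℕ)
    (Gs Bs : Finset (Finset ℕ)) : Prop :=
  IsGDD t K g n X Gs Bs ∧
  ∀ x ∈ X, ∀ G ∈ Gs, x ∈ G → Resolvable (X \ G) (derivedBlocks Bs x)

/-- An RDSQS*(v): an SQS(v) with v ≡ 1 (mod 3) such that, for every point `x`,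
the derived blocks at `x` contain a parallel class `P'` (enumerated by `Bk`);
the multiset consisting of each triple of `P'` three times and each remaining
derived triple twice can be partitioned into (v-1) parallel classes
`P k l` (k ranging over Fin ((v-1)/3), l over Fin 3); and for each `k` the three
parallel classes `P k l` share the common triple `Bk k`. -/
def IsRDSQSstar (v : ℕ) (X : Finset ℕ) (B : Finset (Finset ℕ)) : Prop :=
  IsSteiner 3 4 v X B ∧ v % 3 = 1 ∧
  ∀ x ∈ X, ∃ (P' : Finset (Finset ℕ)) (Bk : Fin ((v - 1) / 3) → Finset ℕ)
    (P : Fin ((v - 1) / 3) → Fin 3 → Finset (Finset ℕ)),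
    P' ⊆ derivedBlocks B x ∧
    IsParallelClass (X.erase x) P' ∧
    (∀ k, Bk k ∈ P') ∧
    (∀ b ∈ P', ∃ k, Bk k = b) ∧
    Function.Injective Bk ∧
    (∀ k l, IsParallelClass (X.erase x) (P k l)) ∧
    ((∑ k, ∑ l, (P k l).val) =
        3 • P'.val + 2 • ((derivedBlocks B x) \ P').val) ∧
    ∀ k l, Bk k ∈ P k l

/-!
The design is cyclic: its points are the residues modulo 42, its groups the residue classes modulo
14, and its block set is invariant under translations. Such a design is determined by the blocks
through `0`, and a family of sets through `0` arises in this way iff it is closed under translating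
any of its points to `0`. A resolution of the derived design at `0` is translated to every other
point, so the whole RDGDD is encoded by one resolved derived design of 234 triples, found by
computer search.
-/

open scoped Pointwise

section Fibres

variable {A Q : Type*} {t : ℕ} {K : Set ℕ} {π : A → Q} {x : A} {𝓑 : Finset (Finset A)} {e : A ↪ ℕ}

/-- A group divisible design on the whole of a type `A`, the groups being the fibres of
`π : A → Q`; a set meets every group in at most one point iff `π` is injective on it. -/
structure IsFibreGDD (t : ℕ) (K : Set ℕ) (π : A → Q) (𝓑 : Finset (Finset A)) : Prop where
  card_mem : ∀ b ∈ 𝓑, #b ∈ K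
  injOn : ∀ b ∈ 𝓑, Set.InjOn π b
  existsUnique_superset : ∀ T : Finset A, #T = t → Set.InjOn π T → ∃! b, b ∈ 𝓑 ∧ T ⊆ b

/-- A resolution of the derived design of `𝓑` at `x`. The parallel classes `P i` consist of the
blocks through `x` themselves, from which `x` has not been removed. -/
structure IsResolutionAt (π : A → Q) (𝓑 : Finset (Finset A)) (x : A) {r : ℕ}
    (P : Fin r → Finset (Finset A)) : Prop where
  subset : ∀ i, P i ⊆ 𝓑
  point_mem : ∀ i, ∀ b ∈ P i, x ∈ b
  existsUnique_class : ∀ b ∈ 𝓑, x ∈ b → ∃! i, b ∈ P i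
  existsUnique_block : ∀ i y, π y ≠ π x → ∃! b, b ∈ P i ∧ y ∈ b

/-- The copy on the natural numbers of a family of finite subsets of `A`. -/
def encode (e : A ↪ ℕ) (𝓑 : Finset (Finset A)) : Finset (Finset ℕ) :=
  𝓑.map (mapEmbedding e).toEmbedding

lemma mem_encode {b : Finset ℕ} : b ∈ encode e 𝓑 ↔ ∃ D ∈ 𝓑, D.map e = b := by
  simp [encode]

lemma existsUnique_mem_encode {p : Finset ℕ → Prop} :
    (∃! b, b ∈ encode e 𝓑 ∧ p b) ↔ ∃! D, D ∈ 𝓑 ∧ p (D.map e) := by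
  constructor
  · rintro ⟨_, ⟨hb, hp⟩, unique⟩
    obtain ⟨D, hD, rfl⟩ := mem_encode.1 hb
    exact ⟨D, ⟨hD, hp⟩, fun D' ⟨hD', hp'⟩ ↦
      map_injective e (unique _ ⟨mem_encode.2 ⟨D', hD', rfl⟩, hp'⟩)⟩
  · rintro ⟨D, ⟨hD, hp⟩, unique⟩
    refine ⟨D.map e, ⟨mem_encode.2 ⟨D, hD, rfl⟩, hp⟩, ?_⟩
    rintro _ ⟨hb, hp'⟩
    obtain ⟨D', hD', rfl⟩ := mem_encode.1 hb
    rw [unique D' ⟨hD', hp'⟩]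

lemma mem_derivedBlocks_encode [DecidableEq A] {b : Finset ℕ} :
    b ∈ derivedBlocks (encode e 𝓑) (e x) ↔ ∃ D ∈ 𝓑, x ∈ D ∧ (D.erase x).map e = b := by
  simp [derivedBlocks, mem_encode, map_erase, and_assoc]

variable [Fintype A] [DecidableEq Q]

/-- The group through the points above `q`, for a design whose groups are the fibres of `π`. -/
def fibre (π : A → Q) (q : Q) : Finset A := {a | π a = q}

lemma mem_fibre {q : Q} {a : A} : a ∈ fibre π q ↔ π a = q := by simp [fibre]

lemma fibre_injective (hπ : π.Surjective) : (fibre π).Injective := by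
  intro q q' h
  obtain ⟨a, rfl⟩ := hπ q
  exact mem_fibre.1 (h ▸ mem_fibre.2 rfl)

theorem IsResolutionAt.isParallelClass {r : ℕ} {P : Fin r → Finset (Finset A)}
    (hP : IsResolutionAt π 𝓑 x P) (injOn : ∀ b ∈ 𝓑, Set.InjOn π b) (i : Fin r) :
    IsParallelClass (univ.map e \ (fibre π (π x)).map e)
      (derivedBlocks (encode e (P i)) (e x)) := by
  classical
  simp only [IsParallelClass, mem_derivedBlocks_encode, ← Finset.map_sdiff]
  constructor
  · rintro _ ⟨D, hD, hx, rfl⟩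
    refine map_subset_map.2 fun y hy ↦ ?_
    obtain ⟨hyx, hy⟩ := mem_erase.1 hy
    rw [mem_sdiff, mem_fibre]
    exact ⟨mem_univ y, fun hπ ↦ hyx (injOn D (hP.subset i hD) hy hx hπ)⟩
  · simp only [forall_mem_map, mem_sdiff, mem_univ, true_and, mem_fibre]
    intro y hy
    obtain ⟨D, ⟨hD, hyD⟩, unique⟩ := hP.existsUnique_block i y hy
    have hyx : y ≠ x := fun h ↦ hy (h ▸ rfl)
    refine ⟨(D.erase x).map e, ⟨⟨D, hD, hP.point_mem i D hD, rfl⟩, ?_⟩, ?_⟩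
    · simp [hyx, hyD]
    · rintro _ ⟨⟨D', hD', -, rfl⟩, hy'⟩
      rw [unique D' ⟨hD', mem_of_mem_erase ((mem_map' e).1 hy')⟩]

theorem IsResolutionAt.resolvable {r : ℕ} {P : Fin r → Finset (Finset A)}
    (hP : IsResolutionAt π 𝓑 x P) (injOn : ∀ b ∈ 𝓑, Set.InjOn π b) :
    Resolvable (univ.map e \ (fibre π (π x)).map e) (derivedBlocks (encode e 𝓑) (e x)) := by
  classical
  refine ⟨r, fun i ↦ derivedBlocks (encode e (P i)) (e x), hP.isParallelClass injOn, ?_, ?_⟩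
  · intro i b hb
    obtain ⟨D, hD, hx, rfl⟩ := mem_derivedBlocks_encode.1 hb
    exact mem_derivedBlocks_encode.2 ⟨D, hP.subset i hD, hx, rfl⟩
  · intro b hb
    obtain ⟨D, hD, hx, rfl⟩ := mem_derivedBlocks_encode.1 hb
    obtain ⟨i, hi, unique⟩ := hP.existsUnique_class D hD hx
    refine ⟨i, mem_derivedBlocks_encode.2 ⟨D, hi, hx, rfl⟩, fun j hj ↦ unique j ?_⟩
    obtain ⟨D', hD', hx', heq⟩ := mem_derivedBlocks_encode.1 hj
    have erase_eq : D'.erase x = D.erase x := map_injective e heq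
    rwa [← insert_erase hx, ← erase_eq, insert_erase hx']

variable [DecidableEq A]

lemma card_inter_fibre_le_one_iff {T : Finset A} :
    (∀ q, #(T ∩ fibre π q) ≤ 1) ↔ Set.InjOn π T := by
  simp only [card_le_one, mem_inter, mem_fibre]
  exact ⟨fun h a ha b hb hab ↦ h (π b) a ⟨ha, hab⟩ b ⟨hb, rfl⟩,
    fun h q a ha b hb ↦ h ha.1 hb.1 (ha.2.trans hb.2.symm)⟩

variable [Fintype Q]

/-- The groups of a design given by a map `π`. -/
def fibres (π : A → Q) : Finset (Finset A) := univ.image (fibre π)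

lemma forall_mem_encode_fibres {p : Finset ℕ → Prop} :
    (∀ G ∈ encode e (fibres π), p G) ↔ ∀ q, p ((fibre π q).map e) := by
  simp [mem_encode, fibres]

lemma existsUnique_mem_fibres (a : A) : ∃! G, G ∈ fibres π ∧ a ∈ G := by
  refine ⟨fibre π (π a), by simp [fibres, mem_fibre], ?_⟩
  rintro G ⟨hG, ha⟩
  obtain ⟨q, -, rfl⟩ := mem_image.1 hG
  rw [mem_fibre.1 ha]

theorem IsFibreGDD.isGDD_encode (h : IsFibreGDD t K π 𝓑) (hπ : π.Surjective) {g : ℕ}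
    (hg : ∀ q, #(fibre π q) = g) (e : A ↪ ℕ) :
    IsGDD t K g (Fintype.card Q) (univ.map e) (encode e (fibres π)) (encode e 𝓑) := by
  have transversal_iff (T : Finset A) :
      (∀ G ∈ encode e (fibres π), #(T.map e ∩ G) ≤ 1) ↔ Set.InjOn π T := by
    simp only [forall_mem_encode_fibres, ← map_inter, card_map, card_inter_fibre_le_one_iff]
  refine ⟨?_, ?_, ?_, ?_, ?_, ?_, ?_⟩
  · rw [card_map, card_eq_sum_card_fiberwise fun a _ ↦ mem_univ (π a)]
    exact (sum_congr rfl fun q _ ↦ hg q).trans (by simp [mul_comm])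
  · rw [encode, card_map, fibres, card_image_of_injective _ (fibre_injective hπ), card_univ]
  · exact forall_mem_encode_fibres.2 fun q ↦
      ⟨map_subset_map.2 (subset_univ _), by rw [card_map, hg]⟩
  · simp only [forall_mem_map, existsUnique_mem_encode, mem_map']
    exact fun a _ ↦ existsUnique_mem_fibres a
  · intro b hb
    obtain ⟨D, hD, rfl⟩ := mem_encode.1 hb
    exact ⟨map_subset_map.2 (subset_univ _), by simpa using h.card_mem D hD⟩
  · intro b hb
    obtain ⟨D, hD, rfl⟩ := mem_encode.1 hb
    exact (transversal_iff D).2 (h.injOn D hD)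
  · intro T hT card_T transversal
    obtain ⟨T, -, rfl⟩ := subset_map_iff.1 hT
    simp only [existsUnique_mem_encode, map_subset_map]
    exact h.existsUnique_superset T (by simpa using card_T) ((transversal_iff T).1 transversal)

theorem IsFibreGDD.isRDGDD_encode (h : IsFibreGDD t K π 𝓑) (hπ : π.Surjective) {g : ℕ}
    (hg : ∀ q, #(fibre π q) = g)
    (hres : ∀ x, ∃ (r : ℕ) (P : Fin r → Finset (Finset A)), IsResolutionAt π 𝓑 x P) (e : A ↪ ℕ) :
    IsRDGDD t K g (Fintype.card Q) (univ.map e) (encode e (fibres π)) (encode e 𝓑) := by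
  refine ⟨h.isGDD_encode hπ hg e, ?_⟩
  simp only [forall_mem_map, forall_mem_encode_fibres, mem_map', mem_fibre]
  rintro x - _ rfl
  obtain ⟨r, P, hP⟩ := hres x
  exact hP.resolvable h.injOn

end Fibres

section Development

variable {A Q : Type*} [AddGroup A] [AddGroup Q] [DecidableEq A] {t r : ℕ} {K : Set ℕ} {π : A →+ Q}
  {x : A} {b : Finset A} {𝓓 : Finset (Finset A)} {P : Fin r → Finset (Finset A)}

/-- The blocks through `0` of a group divisible design on the group `A` that is invariant under
left translations and whose groups are the cosets of `π.ker`. -/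
structure IsBaseStar (t : ℕ) (K : Set ℕ) (π : A →+ Q) (𝓓 : Finset (Finset A)) : Prop where
  zero_mem : ∀ D ∈ 𝓓, 0 ∈ D
  neg_vadd_mem : ∀ D ∈ 𝓓, ∀ y ∈ D, -y +ᵥ D ∈ 𝓓
  card_mem : ∀ D ∈ 𝓓, #D ∈ K
  eq_zero_of_map_eq_zero : ∀ D ∈ 𝓓, ∀ y ∈ D, π y = 0 → y = 0
  existsUnique_superset : ∀ T : Finset A, 0 ∈ T → #T = t → Set.InjOn π T → ∃! D, D ∈ 𝓓 ∧ T ⊆ D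

lemma zero_mem_neg_vadd_iff : 0 ∈ -x +ᵥ b ↔ x ∈ b := by
  rw [mem_neg_vadd_finset_iff, vadd_eq_add, add_zero]

lemma injOn_vadd_finset_iff : Set.InjOn π (x +ᵥ b : Finset A) ↔ Set.InjOn π b := by
  simp only [Set.InjOn, mem_coe, vadd_finset_def, forall_mem_image]
  simp

lemma IsBaseStar.injOn (h : IsBaseStar t K π 𝓓) {D : Finset A} (hD : D ∈ 𝓓) : Set.InjOn π D := by
  intro y hy z hz hyz
  have hmem : -y + z ∈ -y +ᵥ D := vadd_mem_vadd_finset hz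
  have hzero := h.eq_zero_of_map_eq_zero _ (h.neg_vadd_mem D hD y hy) _ hmem (by simp [hyz])
  exact neg_add_eq_zero.1 hzero

variable [Fintype A]

/-- All left translates of the members of `𝓓`. -/
def development (𝓓 : Finset (Finset A)) : Finset (Finset A) := (univ : Finset A) +ᵥ 𝓓

lemma mem_development : b ∈ development 𝓓 ↔ ∃ x : A, ∃ D ∈ 𝓓, x +ᵥ D = b := by
  simp [development, mem_vadd]

namespace IsBaseStar

lemma mem_development_iff_neg_vadd_mem (h : IsBaseStar t K π 𝓓) (hx : x ∈ b) :
    b ∈ development 𝓓 ↔ -x +ᵥ b ∈ 𝓓 := by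
  refine ⟨fun hb ↦ ?_, fun hb ↦ mem_development.2 ⟨x, _, hb, vadd_neg_vadd x b⟩⟩
  obtain ⟨a, D, hD, rfl⟩ := mem_development.1 hb
  obtain ⟨y, hy, rfl⟩ := mem_vadd_finset.1 hx
  simpa [vadd_vadd] using h.neg_vadd_mem D hD y hy

theorem isFibreGDD_development (h : IsBaseStar t K π 𝓓) (ht : t ≠ 0) :
    IsFibreGDD t K π (development 𝓓) where
  card_mem b hb := by
    obtain ⟨x, D, hD, rfl⟩ := mem_development.1 hb
    simpa using h.card_mem D hD
  injOn b hb := by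
    obtain ⟨x, D, hD, rfl⟩ := mem_development.1 hb
    exact injOn_vadd_finset_iff.2 (h.injOn hD)
  existsUnique_superset T card_T injOn_T := by
    obtain ⟨x, hx⟩ : T.Nonempty := card_ne_zero.1 (card_T ▸ ht)
    obtain ⟨D, ⟨hD, hTD⟩, unique⟩ := h.existsUnique_superset (-x +ᵥ T)
      (zero_mem_neg_vadd_iff.2 hx) (by simpa using card_T) (injOn_vadd_finset_iff.2 injOn_T)
    refine ⟨x +ᵥ D, ⟨mem_development.2 ⟨x, D, hD, rfl⟩, ?_⟩, fun b ⟨hb, hTb⟩ ↦ ?_⟩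
    · simpa using vadd_finset_subset_vadd_finset (a := x) hTD
    · have hxb := (h.mem_development_iff_neg_vadd_mem (hTb hx)).1 hb
      rw [← unique _ ⟨hxb, vadd_finset_subset_vadd_finset hTb⟩, vadd_neg_vadd]

theorem isResolutionAt_development (h : IsBaseStar t K π 𝓓) (hP : IsResolutionAt π 𝓓 0 P) (x : A) :
    IsResolutionAt π (development 𝓓) x fun i ↦ x +ᵥ P i where
  subset i b hb := by
    obtain ⟨D, hD, rfl⟩ := mem_vadd_finset.1 hb
    exact mem_development.2 ⟨x, D, hP.subset i hD, rfl⟩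
  point_mem i b hb := by
    rw [← zero_mem_neg_vadd_iff]
    exact hP.point_mem i _ (neg_vadd_mem_iff.2 hb)
  existsUnique_class b hb hx := by
    simp only [← neg_vadd_mem_iff]
    exact hP.existsUnique_class _ ((h.mem_development_iff_neg_vadd_mem hx).1 hb)
      (zero_mem_neg_vadd_iff.2 hx)
  existsUnique_block i y hy := by
    have hne : π (-x + y) ≠ π 0 := by simpa [neg_add_eq_zero] using hy.symm
    obtain ⟨D, ⟨hD, hyD⟩, unique⟩ := hP.existsUnique_block i _ hne
    refine ⟨x +ᵥ D, ⟨vadd_mem_vadd_finset hD, ?_⟩, fun b ⟨hb, hyb⟩ ↦ ?_⟩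
    · exact neg_vadd_mem_iff.1 hyD
    · rw [← unique (-x +ᵥ b) ⟨neg_vadd_mem_iff.2 hb, vadd_mem_vadd_finset hyb⟩, vadd_neg_vadd]

theorem exists_isRDGDD [Fintype Q] [DecidableEq Q] (h : IsBaseStar t K π 𝓓) (ht : t ≠ 0)
    (hP : IsResolutionAt π 𝓓 0 P) (hπ : Function.Surjective π) {g : ℕ}
    (hg : ∀ q, #(fibre π q) = g) : ∃ X Gs Bs, IsRDGDD t K g (Fintype.card Q) X Gs Bs :=
  ⟨_, _, _, (h.isFibreGDD_development ht).isRDGDD_encode hπ hg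
    (fun x ↦ ⟨r, _, h.isResolutionAt_development hP x⟩)
    ((Fintype.equivFin A).toEmbedding.trans Fin.valEmbedding)⟩

end IsBaseStar

end Development

section DerivedResolution

variable {A Q ι : Type*} [AddGroup A] [AddGroup Q] [DecidableEq A] {k r : ℕ} {π : A →+ Q}
  {R : Fin r → ι → Finset A}

/-- A resolution of the derived design at `0` of a translation-invariant group divisible design
with `t = 3` and block size `k + 1`, where `R i j` is the `j`-th block of the `i`-th parallel class.
Unlike in `IsResolutionAt`, the point `0` has been removed from the blocks. -/
structure IsDerivedResolution (π : A →+ Q) (k : ℕ) (R : Fin r → ι → Finset A) : Prop where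
  card_eq : ∀ i j, #(R i j) = k
  map_ne_zero : ∀ i j, ∀ y ∈ R i j, π y ≠ 0
  existsUnique_mem : ∀ i y, π y ≠ 0 → ∃! j, y ∈ R i j
  existsUnique_pair : ∀ y z, π y ≠ 0 → π z ≠ 0 → π y ≠ π z →
    ∃! p : Fin r × ι, y ∈ R p.1 p.2 ∧ z ∈ R p.1 p.2
  neg_vadd_eq : ∀ i j, ∀ y ∈ R i j, ∃ i' j', -y +ᵥ insert 0 ((R i j).erase y) = R i' j'

lemma IsDerivedResolution.zero_notMem (h : IsDerivedResolution π k R) (i : Fin r) (j : ι) :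
    0 ∉ R i j := fun h0 ↦ h.map_ne_zero i j 0 h0 (map_zero π)

variable [Fintype ι]

/-- The blocks through `0` that the `i`-th class of derived blocks comes from. -/
def pointedClass (R : Fin r → ι → Finset A) (i : Fin r) : Finset (Finset A) :=
  univ.image fun j ↦ insert 0 (R i j)

/-- The blocks through `0` that all the derived blocks come from. -/
def pointedBlocks (R : Fin r → ι → Finset A) : Finset (Finset A) := univ.biUnion (pointedClass R)

lemma mem_pointedClass {i : Fin r} {D : Finset A} :
    D ∈ pointedClass R i ↔ ∃ j, insert 0 (R i j) = D := by
  simp [pointedClass]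

lemma mem_pointedBlocks {D : Finset A} : D ∈ pointedBlocks R ↔ ∃ i j, insert 0 (R i j) = D := by
  simp [pointedBlocks, mem_pointedClass]

namespace IsDerivedResolution

lemma existsUnique_pair_mem_pointedBlocks (h : IsDerivedResolution π k R) {y z : A} (hy : π y ≠ 0)
    (hz : π z ≠ 0) (hyz : π y ≠ π z) : ∃! D, D ∈ pointedBlocks R ∧ y ∈ D ∧ z ∈ D := by
  have hy0 : y ≠ 0 := by rintro rfl; exact hy (map_zero π)
  have hz0 : z ≠ 0 := by rintro rfl; exact hz (map_zero π)
  obtain ⟨⟨i, j⟩, ⟨hyR, hzR⟩, unique⟩ := h.existsUnique_pair y z hy hz hyz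
  refine ⟨insert 0 (R i j), ⟨mem_pointedBlocks.2 ⟨i, j, rfl⟩, by simp [hyR], by simp [hzR]⟩, ?_⟩
  rintro D ⟨hD, hyD, hzD⟩
  obtain ⟨i', j', rfl⟩ := mem_pointedBlocks.1 hD
  obtain ⟨rfl, rfl⟩ := Prod.mk.inj <|
    unique (i', j') ⟨mem_of_mem_insert_of_ne hyD hy0, mem_of_mem_insert_of_ne hzD hz0⟩
  rfl

theorem isBaseStar (h : IsDerivedResolution π k R) :
    IsBaseStar 3 {k + 1} π (pointedBlocks R) where
  zero_mem D hD := by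
    obtain ⟨i, j, rfl⟩ := mem_pointedBlocks.1 hD
    exact mem_insert_self 0 _
  neg_vadd_mem D hD y hy := by
    obtain ⟨i, j, rfl⟩ := mem_pointedBlocks.1 hD
    obtain rfl | hyR := mem_insert.1 hy
    · simpa using hD
    obtain ⟨i', j', heq⟩ := h.neg_vadd_eq i j y hyR
    refine mem_pointedBlocks.2 ⟨i', j', ?_⟩
    rw [← heq, ← insert_erase hyR, insert_comm, vadd_finset_insert (-y) y, vadd_eq_add,
      neg_add_cancel, insert_erase hyR]
  card_mem D hD := by
    obtain ⟨i, j, rfl⟩ := mem_pointedBlocks.1 hD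
    simp [card_insert_of_notMem (h.zero_notMem i j), h.card_eq i j]
  eq_zero_of_map_eq_zero D hD y hy hπ := by
    obtain ⟨i, j, rfl⟩ := mem_pointedBlocks.1 hD
    exact (mem_insert.1 hy).resolve_right fun hyR ↦ h.map_ne_zero i j y hyR hπ
  existsUnique_superset T h0 card_T injOn_T := by
    obtain ⟨y, z, hyz, hT⟩ := card_eq_two.1 (show #(T.erase 0) = 2 by simp [h0, card_T])
    obtain rfl : insert 0 {y, z} = T := by rw [← hT, insert_erase h0]
    have hy0 : y ≠ 0 := ne_of_mem_erase (hT ▸ mem_insert_self y {z})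
    have hz0 : z ≠ 0 := ne_of_mem_erase (hT ▸ mem_insert_of_mem (mem_singleton_self z))
    have hπy : π y ≠ 0 := fun hπ ↦ hy0 (injOn_T (by simp) (by simp) (hπ.trans (map_zero π).symm))
    have hπz : π z ≠ 0 := fun hπ ↦ hz0 (injOn_T (by simp) (by simp) (hπ.trans (map_zero π).symm))
    have hπyz : π y ≠ π z := fun hπ ↦ hyz (injOn_T (by simp) (by simp) hπ)
    refine (existsUnique_congr fun D ↦ and_congr_right fun hD ↦ ?_).1
      (h.existsUnique_pair_mem_pointedBlocks hπy hπz hπyz)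
    obtain ⟨i, j, rfl⟩ := mem_pointedBlocks.1 hD
    simp [insert_subset_iff]

theorem isResolutionAt_zero (h : IsDerivedResolution π k R) (hk : 1 < k) :
    IsResolutionAt π (pointedBlocks R) 0 (pointedClass R) where
  subset i := subset_biUnion_of_mem (pointedClass R) (mem_univ i)
  point_mem i D hD := by
    obtain ⟨j, rfl⟩ := mem_pointedClass.1 hD
    exact mem_insert_self 0 _
  existsUnique_class D hD _ := by
    obtain ⟨i, j, rfl⟩ := mem_pointedBlocks.1 hD
    obtain ⟨y, hy, z, hz, hyz⟩ := one_lt_card.1 (hk.trans_eq (h.card_eq i j).symm)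
    have hπyz : π y ≠ π z := fun hπ ↦ hyz (h.isBaseStar.injOn hD (by simp [hy]) (by simp [hz]) hπ)
    have existsUnique_index := h.existsUnique_pair y z (h.map_ne_zero i j y hy)
      (h.map_ne_zero i j z hz) hπyz
    refine ⟨i, mem_pointedClass.2 ⟨j, rfl⟩, fun i' hi' ↦ ?_⟩
    obtain ⟨j', heq⟩ := mem_pointedClass.1 hi'
    have block_eq : R i' j' = R i j := by
      rw [← erase_insert (h.zero_notMem i' j'), heq, erase_insert (h.zero_notMem i j)]
    exact congrArg Prod.fst (existsUnique_index.unique (y₁ := (i', j')) (y₂ := (i, j))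
      (by simp [block_eq, hy, hz]) ⟨hy, hz⟩)
  existsUnique_block i y hy := by
    rw [map_zero] at hy
    have hy0 : y ≠ 0 := by rintro rfl; exact hy (map_zero π)
    obtain ⟨j, hyR, unique⟩ := h.existsUnique_mem i y hy
    refine ⟨insert 0 (R i j), ⟨mem_pointedClass.2 ⟨j, rfl⟩, mem_insert_of_mem hyR⟩, ?_⟩
    rintro D ⟨hD, hyD⟩
    obtain ⟨j', rfl⟩ := mem_pointedClass.1 hD
    rw [unique j' (mem_of_mem_insert_of_ne hyD hy0)]

end IsDerivedResolution

end DerivedResolution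

section ExactCover

variable {ι A : Type*} {I : Finset ι} {B : ι → Finset A} {S : Finset A}

lemma subset_of_sum_val_eq (h : ∑ i ∈ I, (B i).val = S.val) {i : ι} (hi : i ∈ I) : B i ⊆ S := by
  intro a ha
  rw [← mem_val, ← h, Multiset.mem_sum]
  exact ⟨i, hi, ha⟩

lemma existsUnique_mem_of_sum_val_eq (h : ∑ i ∈ I, (B i).val = S.val) {a : A} (ha : a ∈ S) :
    ∃! i, i ∈ I ∧ a ∈ B i := by
  classical
  have count_eq : ∑ i ∈ I, (B i).val.count a = 1 := by
    rw [← Multiset.count_sum', h, Multiset.count_eq_one_of_mem S.nodup ha]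
  simpa [Multiset.count_eq_of_nodup (nodup _), card_eq_one_iff_existsUnique] using count_eq

end ExactCover

section CyclicDesign

/-- The derived design at `0` of a cyclic RDGDD(3, 4, 42) of type `3 ^ 14` on the residues
modulo 42, resolved into 18 parallel classes of 13 triples. -/
def cyclicTriple : Fin 18 → Fin 13 → Finset (Fin 42) :=
  ![
    ![{1, 2, 27}, {3, 20, 36}, {4, 23, 31}, {5, 10, 25}, {6, 8, 39}, {7, 9, 33}, {11, 12, 16},
      {13, 15, 26}, {17, 30, 40}, {18, 19, 22}, {21, 29, 41}, {24, 34, 37}, {32, 35, 38}],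
    ![{1, 3, 16}, {2, 4, 5}, {6, 13, 35}, {7, 12, 22}, {8, 15, 38}, {9, 24, 31}, {10, 27, 33},
      {11, 29, 37}, {17, 23, 32}, {18, 21, 39}, {19, 20, 30}, {25, 40, 41}, {26, 34, 36}],
    ![{1, 4, 24}, {2, 8, 34}, {3, 15, 18}, {5, 20, 37}, {6, 7, 41}, {9, 10, 21}, {11, 27, 40},
      {12, 23, 36}, {13, 16, 32}, {17, 29, 38}, {19, 25, 35}, {22, 31, 39}, {26, 30, 33}],
    ![{1, 5, 31}, {2, 18, 37}, {3, 12, 38}, {4, 30, 41}, {6, 17, 24}, {7, 13, 20}, {8, 10, 16},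
      {9, 29, 40}, {11, 21, 26}, {15, 22, 33}, {19, 34, 39}, {23, 27, 35}, {25, 32, 36}],
    ![{1, 6, 19}, {2, 13, 29}, {3, 27, 30}, {4, 17, 37}, {5, 36, 40}, {7, 15, 24}, {8, 11, 33},
      {9, 35, 39}, {10, 32, 34}, {12, 20, 41}, {16, 22, 25}, {18, 26, 31}, {21, 23, 38}],
    ![{1, 7, 8}, {2, 17, 21}, {3, 22, 37}, {4, 20, 40}, {5, 15, 35}, {6, 31, 38}, {9, 27, 34},
      {10, 12, 29}, {11, 18, 36}, {13, 23, 25}, {16, 33, 41}, {19, 24, 26}, {30, 32, 39}],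
    ![{1, 9, 32}, {2, 10, 20}, {3, 19, 29}, {4, 8, 26}, {5, 12, 24}, {6, 21, 36}, {7, 25, 31},
      {11, 15, 34}, {13, 33, 38}, {16, 35, 40}, {17, 22, 27}, {18, 23, 30}, {37, 39, 41}],
    ![{1, 10, 39}, {2, 11, 31}, {3, 4, 13}, {5, 16, 34}, {6, 12, 27}, {7, 19, 37}, {8, 20, 21},
      {9, 38, 41}, {15, 30, 36}, {17, 25, 26}, {18, 24, 35}, {22, 23, 40}, {29, 32, 33}],
    ![{1, 11, 23}, {2, 15, 41}, {3, 5, 26}, {4, 36, 39}, {6, 33, 37}, {7, 10, 40}, {8, 17, 35},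
      {9, 16, 18}, {12, 13, 34}, {19, 27, 38}, {20, 25, 29}, {21, 30, 31}, {22, 24, 32}],
    ![{1, 12, 33}, {2, 7, 38}, {3, 8, 32}, {4, 25, 27}, {5, 9, 22}, {6, 18, 29}, {10, 17, 36},
      {11, 24, 30}, {13, 19, 31}, {15, 20, 23}, {16, 26, 39}, {21, 37, 40}, {34, 35, 41}],
    ![{1, 13, 21}, {2, 19, 32}, {3, 9, 11}, {4, 29, 34}, {5, 7, 23}, {6, 15, 25}, {8, 18, 40},
      {10, 22, 41}, {12, 30, 35}, {16, 20, 24}, {17, 33, 39}, {26, 37, 38}, {27, 31, 36}],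
    ![{1, 17, 34}, {2, 26, 35}, {3, 7, 39}, {4, 12, 19}, {5, 18, 41}, {6, 32, 40}, {8, 9, 25},
      {10, 30, 37}, {11, 13, 22}, {15, 21, 27}, {16, 36, 38}, {20, 31, 33}, {23, 24, 29}],
    ![{1, 18, 20}, {2, 33, 36}, {3, 23, 41}, {4, 10, 35}, {5, 29, 39}, {6, 9, 26}, {7, 11, 17},
      {8, 13, 24}, {12, 31, 32}, {15, 19, 40}, {16, 27, 37}, {21, 22, 34}, {25, 30, 38}],
    ![{1, 22, 30}, {2, 23, 39}, {3, 6, 10}, {4, 7, 16}, {5, 13, 17}, {8, 31, 41}, {9, 19, 36},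
      {11, 20, 35}, {12, 21, 25}, {15, 32, 37}, {18, 34, 38}, {24, 33, 40}, {26, 27, 29}],
    ![{1, 25, 37}, {2, 3, 40}, {4, 6, 11}, {5, 8, 27}, {7, 26, 32}, {9, 13, 30}, {10, 15, 31},
      {12, 17, 18}, {16, 19, 21}, {20, 38, 39}, {22, 29, 35}, {23, 33, 34}, {24, 36, 41}],
    ![{1, 26, 41}, {2, 24, 25}, {3, 33, 35}, {4, 22, 38}, {5, 21, 32}, {6, 16, 23}, {7, 18, 27},
      {8, 29, 30}, {9, 17, 20}, {10, 11, 19}, {12, 15, 39}, {13, 36, 37}, {31, 34, 40}],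
    ![{1, 35, 36}, {2, 6, 22}, {3, 21, 24}, {4, 9, 15}, {5, 11, 38}, {7, 30, 34}, {8, 12, 37},
      {10, 23, 26}, {13, 39, 40}, {16, 29, 31}, {17, 19, 41}, {18, 25, 33}, {20, 27, 32}],
    ![{1, 38, 40}, {2, 9, 12}, {3, 25, 34}, {4, 21, 33}, {5, 6, 30}, {7, 29, 36}, {8, 19, 23},
      {10, 13, 18}, {11, 32, 41}, {15, 16, 17}, {20, 22, 26}, {24, 27, 39}, {31, 35, 37}]]

/-- Reduction modulo 14; the groups of the cyclic design are its fibres. -/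
def modFourteen : Fin 42 →+ Fin 14 := .mk' (fun y ↦ Fin.ofNat 14 y) (by decide +kernel)

lemma modFourteen_surjective : Function.Surjective modFourteen := by decide +kernel

lemma card_fibre_modFourteen : ∀ q, #(fibre modFourteen q) = 3 := by decide +kernel

lemma card_cyclicTriple : ∀ i j, #(cyclicTriple i j) = 3 := by decide +kernel

lemma sum_val_cyclicTriple :
    ∀ i, ∑ j, (cyclicTriple i j).val = (univ.filter fun y ↦ modFourteen y ≠ 0).val := by
  decide +kernel

lemma sum_val_erase_cyclicTriple :
    ∀ y, modFourteen y ≠ 0 →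
      ∑ p : Fin 18 × Fin 13 with y ∈ cyclicTriple p.1 p.2, ((cyclicTriple p.1 p.2).erase y).val =
        (univ.filter fun z ↦ modFourteen z ≠ 0 ∧ modFourteen y ≠ modFourteen z).val := by
  decide +kernel

-- Searching only the triples through `-y` keeps the evaluation cheap.
lemma exists_neg_vadd_cyclicTriple :
    ∀ i j, ∀ y ∈ cyclicTriple i j,
      ∃ p ∈ univ.filter fun p : Fin 18 × Fin 13 ↦ -y ∈ cyclicTriple p.1 p.2,
        -y +ᵥ insert 0 ((cyclicTriple i j).erase y) = cyclicTriple p.1 p.2 := by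
  decide +kernel

theorem isDerivedResolution_cyclicTriple : IsDerivedResolution modFourteen 3 cyclicTriple where
  card_eq := card_cyclicTriple
  map_ne_zero i j y hy := by
    simpa using subset_of_sum_val_eq (sum_val_cyclicTriple i) (mem_univ j) hy
  existsUnique_mem i y hy := by
    simpa using existsUnique_mem_of_sum_val_eq (sum_val_cyclicTriple i) (a := y) (by simpa using hy)
  existsUnique_pair y z hy hz hyz := by
    have hzy : z ≠ y := fun h ↦ hyz (h ▸ rfl)
    simpa [hzy] using
      existsUnique_mem_of_sum_val_eq (sum_val_erase_cyclicTriple y hy) (a := z) (by simp [hz, hyz])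
  neg_vadd_eq i j y hy := by
    obtain ⟨p, -, hp⟩ := exists_neg_vadd_cyclicTriple i j y hy
    exact ⟨p.1, p.2, hp⟩

end CyclicDesign

/-- There exists an RDGDD(3, 4, 42) of type 3^14. -/
theorem stmt_3 : ∃ X Gs Bs, IsRDGDD 3 {4} 3 14 X Gs Bs := by
  have resolution := isDerivedResolution_cyclicTriple
  exact resolution.isBaseStar.exists_isRDGDD three_ne_zero
    (resolution.isResolutionAt_zero (by norm_num)) modFourteen_surjective card_fibre_modFourteen
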